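/- Let f : ℝ^d → ℝ be differentiable with M-Lipschitz gradient. Then for all x, y ∈ ℝ^d and every ν > 0, f(x) ≤ f(y) + ⟨∇^ν f(y), x − y⟩ + (√d ν M / 2)‖x − y‖ + M‖x − y‖². -/

import Mathlib

open RealInnerProductSpace

/-- Forward-difference gradient estimator `∇^ν f(x) := Σ_j ((f(x + ν e_j) − f(x))/ν) e_j`. -/
noncomputable def fdGrad (d : ℕ) (f : EuclideanSpace ℝ (Fin d) → ℝ)
    (x : EuclideanSpace ℝ (Fin d)) (ν : ℝ) : EuclideanSpace ℝ (Fin d) :=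
  ∑ j : Fin d, ((f (x + ν • EuclideanSpace.single j (1 : ℝ)) - f x) / ν) •
    EuclideanSpace.single j (1 : ℝ)

/-!
A derivative with `‖f' z - f' y‖ ≤ M ‖z - y‖` makes the first-order Taylor remainder at `y` at most
`M / 2 * ‖x - y‖ ^ 2`. Used with `x = y + ν e_j`, this puts each coordinate of `∇^ν f(y)` within
`|ν| M / 2` of the corresponding partial derivative, so that `‖∇^ν f(y) - ∇f(y)‖ ≤ √d |ν| M / 2`.
Used with arbitrary `x`, it bounds `f x` by the linearization at `y`, in which the gradient is then
replaced by the estimator through Cauchy–Schwarz.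
-/

section TaylorRemainder

variable {E F : Type*} [NormedAddCommGroup E] [NormedSpace ℝ E] [NormedAddCommGroup F]
  [NormedSpace ℝ F] {f : E → F} {f' : E → E →L[ℝ] F} {s : Set E} {x y : E} {M : ℝ}

lemma mapsTo_lineMap_Icc_of_starConvex (hs : StarConvex ℝ y s) (hx : x ∈ s) :
    Set.MapsTo (AffineMap.lineMap y x) (Set.Icc (0 : ℝ) 1) s := by
  rw [Set.mapsTo_iff_image_subset, ← segment_eq_image_lineMap]
  exact hs.segment_subset hx

lemma hasDerivWithinAt_taylorRemainder_lineMap (hs : StarConvex ℝ y s) (hx : x ∈ s)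
    (hf : ∀ z ∈ s, HasFDerivWithinAt f (f' z) s z) {t : ℝ} (ht : t ∈ Set.Icc (0 : ℝ) 1) :
    HasDerivWithinAt (fun r : ℝ ↦ f (AffineMap.lineMap y x r) - f y - r • f' y (x - y))
      ((f' (AffineMap.lineMap y x t) - f' y) (x - y)) (Set.Icc 0 1) t := by
  have hmaps := mapsTo_lineMap_Icc_of_starConvex hs hx
  have hcomp := (hf _ (hmaps ht)).comp_hasDerivWithinAt t
    AffineMap.hasDerivWithinAt_lineMap hmaps
  have hlinear := (hasDerivWithinAt_id t (Set.Icc 0 1)).smul_const (f' y (x - y))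
  exact ((hcomp.sub_const (f y)).sub hlinear).congr_deriv (by simp)

theorem norm_taylorRemainder_le_of_norm_hasFDerivWithinAt_sub_le (hs : StarConvex ℝ y s)
    (hx : x ∈ s) (hf : ∀ z ∈ s, HasFDerivWithinAt f (f' z) s z)
    (hf' : ∀ z ∈ s, ‖f' z - f' y‖ ≤ M * ‖z - y‖) :
    ‖f x - f y - f' y (x - y)‖ ≤ M / 2 * ‖x - y‖ ^ 2 := by
  have hderiv := fun t ↦ hasDerivWithinAt_taylorRemainder_lineMap hs hx hf (t := t)
  have hbound : ∀ t ∈ Set.Ico (0 : ℝ) 1,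
      ‖(f' (AffineMap.lineMap y x t) - f' y) (x - y)‖ ≤ M * ‖x - y‖ ^ 2 * t := by
    intro t ht
    have hmem : AffineMap.lineMap y x t ∈ s :=
      mapsTo_lineMap_Icc_of_starConvex hs hx (Set.Ico_subset_Icc_self ht)
    calc ‖(f' (AffineMap.lineMap y x t) - f' y) (x - y)‖
        ≤ M * ‖AffineMap.lineMap y x t - y‖ * ‖x - y‖ :=
          ContinuousLinearMap.le_of_opNorm_le _ (hf' _ hmem) _
      _ = M * ‖x - y‖ ^ 2 * t := by
          rw [AffineMap.lineMap_apply_module', add_sub_cancel_right, norm_smul,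
            Real.norm_of_nonneg ht.1]
          ring
  have hparabola (t : ℝ) :
      HasDerivAt (fun r ↦ M / 2 * ‖x - y‖ ^ 2 * r ^ 2) (M * ‖x - y‖ ^ 2 * t) t :=
    ((hasDerivAt_pow 2 t).const_mul _).congr_deriv (by push_cast; ring)
  have hfence := image_norm_le_of_norm_deriv_right_le_deriv_boundary
    (fun t ht ↦ (hderiv t ht).continuousWithinAt)
    (fun t ht ↦ (hderiv t (Set.Ico_subset_Icc_self ht)).mono_of_mem_nhdsWithin
      (Icc_mem_nhdsGE_of_mem ht))
    (by simp) hparabola hbound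
  simpa using hfence (Set.right_mem_Icc.2 zero_le_one)

end TaylorRemainder

section Gradient

variable {E : Type*} [NormedAddCommGroup E] [CompleteSpace E]

lemma norm_fderiv_sub_fderiv_eq_norm_gradient_sub_gradient {𝕜 : Type*} [RCLike 𝕜]
    [InnerProductSpace 𝕜 E] (f g : E → 𝕜) (x y : E) :
    ‖fderiv 𝕜 f x - fderiv 𝕜 g y‖ = ‖gradient f x - gradient g y‖ := by
  rw [← toDual_gradient, ← toDual_gradient, ← map_sub, LinearIsometryEquiv.norm_map]

theorem abs_sub_sub_inner_gradient_le [InnerProductSpace ℝ E] {f : E → ℝ} {M : ℝ} {y : E}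
    (hf : Differentiable ℝ f) (hM : ∀ z, ‖gradient f z - gradient f y‖ ≤ M * ‖z - y‖) (x : E) :
    |f x - f y - ⟪gradient f y, x - y⟫| ≤ M / 2 * ‖x - y‖ ^ 2 := by
  rw [inner_gradient_left, ← Real.norm_eq_abs]
  refine norm_taylorRemainder_le_of_norm_hasFDerivWithinAt_sub_le (starConvex_univ y)
    (Set.mem_univ x) (fun z _ ↦ (hf z).hasFDerivAt.hasFDerivWithinAt) fun z _ ↦ ?_
  rw [norm_fderiv_sub_fderiv_eq_norm_gradient_sub_gradient]
  exact hM z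

end Gradient

lemma norm_le_sqrt_card_mul_of_forall_norm_inner_le {𝕜 E ι : Type*} [RCLike 𝕜]
    [NormedAddCommGroup E] [InnerProductSpace 𝕜 E] [Fintype ι] (b : OrthonormalBasis ι 𝕜 E)
    {x : E} {C : ℝ} (hC : ∀ i, ‖inner 𝕜 (b i) x‖ ≤ C) : ‖x‖ ≤ √(Fintype.card ι) * C := by
  refine (b.norm_le_card_mul_iSup_norm_inner x).trans ?_
  rcases isEmpty_or_nonempty ι with hι | hι
  · simp
  · gcongr
    exact ciSup_le hC

section ForwardDifference

variable {d : ℕ} {f : EuclideanSpace ℝ (Fin d) → ℝ} {M ν : ℝ} {y : EuclideanSpace ℝ (Fin d)}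

lemma fdGrad_apply (f : EuclideanSpace ℝ (Fin d) → ℝ) (y : EuclideanSpace ℝ (Fin d)) (ν : ℝ)
    (j : Fin d) :
    fdGrad d f y ν j = (f (y + ν • EuclideanSpace.single j (1 : ℝ)) - f y) / ν := by
  simp [fdGrad, Pi.single_apply]

lemma abs_fdGrad_sub_gradient_apply_le (hf : Differentiable ℝ f)
    (hM : ∀ z, ‖gradient f z - gradient f y‖ ≤ M * ‖z - y‖) (hν : ν ≠ 0) (j : Fin d) :
    |(fdGrad d f y ν - gradient f y) j| ≤ |ν| * M / 2 := by
  have hremainder : |f (y + ν • EuclideanSpace.single j (1 : ℝ)) - f y - ν * gradient f y j|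
      ≤ M / 2 * |ν| ^ 2 := by
    simpa only [add_sub_cancel_left, inner_smul_right, EuclideanSpace.inner_single_right, one_mul,
      conj_trivial, norm_smul, PiLp.norm_single, norm_one, mul_one, Real.norm_eq_abs] using
      abs_sub_sub_inner_gradient_le hf hM (y + ν • EuclideanSpace.single j (1 : ℝ))
  have hscaled : (fdGrad d f y ν - gradient f y) j =
      (f (y + ν • EuclideanSpace.single j (1 : ℝ)) - f y - ν * gradient f y j) / ν := by
    rw [PiLp.sub_apply, fdGrad_apply]
    field_simp
  rw [hscaled, abs_div, div_le_iff₀ (abs_pos.2 hν)]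
  linarith

theorem norm_fdGrad_sub_gradient_le (hf : Differentiable ℝ f)
    (hM : ∀ z, ‖gradient f z - gradient f y‖ ≤ M * ‖z - y‖) (hν : ν ≠ 0) :
    ‖fdGrad d f y ν - gradient f y‖ ≤ √d * |ν| * M / 2 := by
  have hnorm := norm_le_sqrt_card_mul_of_forall_norm_inner_le
    (EuclideanSpace.basisFun (Fin d) ℝ) (x := fdGrad d f y ν - gradient f y)
    (C := |ν| * M / 2) fun j ↦ by
      rw [EuclideanSpace.basisFun_inner]
      exact abs_fdGrad_sub_gradient_apply_le hf hM hν j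
  rw [Fintype.card_fin] at hnorm
  linarith

end ForwardDifference

theorem stmt3_general {d : ℕ} {f : EuclideanSpace ℝ (Fin d) → ℝ} {M : ℝ}
    {y : EuclideanSpace ℝ (Fin d)} (hf : Differentiable ℝ f)
    (hM : ∀ z, ‖gradient f z - gradient f y‖ ≤ M * ‖z - y‖)
    (x : EuclideanSpace ℝ (Fin d)) {ν : ℝ} (hν : ν ≠ 0) :
    |f x - f y - ⟪fdGrad d f y ν, x - y⟫| ≤
      (√d * |ν| * M / 2) * ‖x - y‖ + M / 2 * ‖x - y‖ ^ 2 := by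
  have hlinearization := abs_sub_sub_inner_gradient_le hf hM x
  have herror : |⟪fdGrad d f y ν - gradient f y, x - y⟫| ≤ (√d * |ν| * M / 2) * ‖x - y‖ :=
    (abs_real_inner_le_norm _ _).trans <| by
      gcongr
      exact norm_fdGrad_sub_gradient_le hf hM hν
  calc |f x - f y - ⟪fdGrad d f y ν, x - y⟫|
      = |(f x - f y - ⟪gradient f y, x - y⟫) - ⟪fdGrad d f y ν - gradient f y, x - y⟫| := by
        rw [inner_sub_left]
        ring_nf
    _ ≤ |f x - f y - ⟪gradient f y, x - y⟫| + |⟪fdGrad d f y ν - gradient f y, x - y⟫| :=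
        abs_sub _ _
    _ ≤ (√d * |ν| * M / 2) * ‖x - y‖ + M / 2 * ‖x - y‖ ^ 2 := by linarith

theorem stmt3 (d : ℕ) (hd : 1 ≤ d) (f : EuclideanSpace ℝ (Fin d) → ℝ) (M : ℝ)
    (hdiff : Differentiable ℝ f)
    (hlip : ∀ x₁ x₂, ‖gradient f x₁ - gradient f x₂‖ ≤ M * ‖x₁ - x₂‖)
    (x y : EuclideanSpace ℝ (Fin d)) (ν : ℝ) (hν : 0 < ν) :
    f x ≤ f y + ⟪fdGrad d f y ν, x - y⟫ + (Real.sqrt d * ν * M / 2) * ‖x - y‖ +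
      M * ‖x - y‖ ^ 2 := by
  have hbound := le_of_abs_le (stmt3_general hdiff (hlip · y) x hν.ne')
  have hslack : 0 ≤ M * ‖x - y‖ * ‖x - y‖ :=
    mul_nonneg ((norm_nonneg _).trans (hlip x y)) (norm_nonneg _)
  rw [abs_of_pos hν] at hbound
  linarith
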